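/- Let α > 1 and let F be analytic on the unit disc 𝔻 with ‖F‖_{A¹_α} = (1/π) ∫_𝔻 |F(z)| (1−|z|²)^{α−2} dz < ∞. For 0 < R < 1 and a measurable set Ω ⊆ 𝔻, define the hyperbolic maximum Nyquist density ρ_𝔻(Ω,R) = sup_{z∈𝔻} |Ω ∩ B_{ϱ_𝔻}(z,R)|_𝔻, where B_{ϱ_𝔻}(z,R) = {w ∈ 𝔻 : |(z−w)/(1−z̄w)| < R} is the pseudohyperbolic ball and |E|_𝔻 = ∫_E (1−|z|²)^{−2} dz the hyperbolic measure. Then, with C^α(R) = (1/(α−1))(1 − (1−R²)^{α−1}): (1/π) ∫_Ω |F(z)| (1−|z|²)^{α−2} dz ≤ (2 ρ_𝔻(Ω,R) / C^α(R)) · ‖F‖_{A¹_α}. -/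

import Mathlib

open MeasureTheory

/-- The hyperbolic measure `|E|_𝔻 = ∫_E (1 - |z|²)^{-2} dz` on the unit disc. -/
noncomputable def hyperbolicMeasure : Measure ℂ :=
  volume.withDensity (fun z => ENNReal.ofReal (((1 - ‖z‖ ^ 2) ^ 2)⁻¹))

/-- The pseudohyperbolic ball `B_{ϱ_𝔻}(z, R) = {w ∈ 𝔻 : |(z - w)/(1 - z̄ w)| < R}`. -/
def pseudohyperbolicBall (z : ℂ) (R : ℝ) : Set ℂ :=
  {w : ℂ | ‖w‖ < 1 ∧ ‖(z - w) / (1 - starRingEnd ℂ z * w)‖ < R}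

/-- The hyperbolic maximum Nyquist density `ρ_𝔻(Ω, R) = sup_{z ∈ 𝔻} |Ω ∩ B_{ϱ_𝔻}(z, R)|_𝔻`. -/
noncomputable def hypMaxNyquistDensity (Ω : Set ℂ) (R : ℝ) : ℝ :=
  ⨆ z : Metric.ball (0 : ℂ) 1,
    (hyperbolicMeasure (Ω ∩ pseudohyperbolicBall (z : ℂ) R)).toReal

/-!
For `w` in the disc let `φ_w` be the involutive automorphism exchanging `0` and `w`. It preserves
the hyperbolic measure and maps the Euclidean ball of radius `R` onto `B(w, R)`, and
`F ↦ (1 - w̄ u)^{-2α} F(φ_w u)` preserves, up to the factor `(1 - |w|²)^α`, the density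
`(1 - |z|²)^α |F z|` of the Bergman norm with respect to the hyperbolic measure. The sub-mean-value
inequality on circles about `0`, integrated against `r (1 - r²)^{α-2}`, therefore transports to
`π C^α(R) · density(w) ≤ ∫_{B(w, R)} density`. Integrating over `w ∈ Ω` and exchanging the
integrals, each `z` is counted with weight `|Ω ∩ B(z, R)| ≤ ρ(Ω, R)`. This gives the constant
`ρ / (π C^α(R))`, which is smaller than `2 ρ / C^α(R)`.
-/

namespace LargeSieve

open Set Metric
open scoped ENNReal Real ComplexConjugate

section Schur

variable {X : Type*} [MeasurableSpace X] {μ : Measure X} [SFinite μ]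

lemma mul_setLIntegral_le_of_le_setLIntegral {S : Set (X × X)} (hS : MeasurableSet S)
    {Ω : Set X} (hΩ : MeasurableSet Ω) {g : X → ℝ≥0∞} (hg : AEMeasurable g μ) {c ρ : ℝ≥0∞}
    (hc : ∀ w ∈ Ω, c * g w ≤ ∫⁻ z in {z | (w, z) ∈ S}, g z ∂μ)
    (hρ : ∀ᵐ z ∂μ, μ (Ω ∩ {w | (w, z) ∈ S}) ≤ ρ) :
    c * ∫⁻ w in Ω, g w ∂μ ≤ ρ * ∫⁻ z, g z ∂μ := by
  set K : X → X → ℝ≥0∞ := fun w z => S.indicator (fun p => g p.2) (w, z)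
  have hfst (w : X) : ∫⁻ z, K w z ∂μ = ∫⁻ z in {z | (w, z) ∈ S}, g z ∂μ :=
    lintegral_indicator (measurable_prodMk_left hS) g
  have hsnd (z : X) : ∫⁻ w in Ω, K w z ∂μ = μ (Ω ∩ {w | (w, z) ∈ S}) * g z := by
    have hSz : MeasurableSet {w | (w, z) ∈ S} := measurable_prodMk_right hS
    calc ∫⁻ w in Ω, K w z ∂μ = ∫⁻ _ in {w | (w, z) ∈ S}, g z ∂μ.restrict Ω :=
          lintegral_indicator hSz fun _ => g z
      _ = μ (Ω ∩ {w | (w, z) ∈ S}) * g z := by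
          rw [setLIntegral_const, Measure.restrict_apply hSz, inter_comm, mul_comm]
  calc c * ∫⁻ w in Ω, g w ∂μ ≤ ∫⁻ w in Ω, c * g w ∂μ := lintegral_const_mul_le c g
    _ ≤ ∫⁻ w in Ω, ∫⁻ z, K w z ∂μ ∂μ :=
        setLIntegral_mono' hΩ fun w hw => (hc w hw).trans_eq (hfst w).symm
    _ = ∫⁻ z, ∫⁻ w in Ω, K w z ∂μ ∂μ :=
        lintegral_lintegral_swap (hg.comp_snd.indicator hS)
    _ ≤ ∫⁻ z, ρ * g z ∂μ := by
        refine lintegral_mono_ae (hρ.mono fun z hz => ?_)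
        rw [hsnd]
        gcongr
    _ = ρ * ∫⁻ z, g z ∂μ := lintegral_const_mul'' ρ hg

end Schur

section ChangeOfVariables

lemma abs_det_toSpanSingleton_restrictScalars (c : ℂ) :
    |((ContinuousLinearMap.toSpanSingleton ℂ c).restrictScalars ℝ).det| = ‖c‖ ^ 2 := by
  simp [ContinuousLinearMap.det, LinearMap.det_restrictScalars, Algebra.norm_complex_eq,
    Complex.normSq_eq_norm_sq]

lemma lintegral_image_eq_lintegral_norm_deriv_sq_mul {φ φ' : ℂ → ℂ} {s : Set ℂ}
    (hs : MeasurableSet s) (hφ : ∀ u ∈ s, HasDerivWithinAt φ (φ' u) s u) (hinj : InjOn φ s)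
    (f : ℂ → ℝ≥0∞) :
    ∫⁻ z in φ '' s, f z = ∫⁻ u in s, ENNReal.ofReal (‖φ' u‖ ^ 2) * f (φ u) := by
  simp_rw [← abs_det_toSpanSingleton_restrictScalars]
  exact lintegral_image_eq_lintegral_abs_det_fderiv_mul volume hs
    (fun u hu => (hφ u hu).hasFDerivWithinAt.restrictScalars ℝ) hinj f

lemma setLIntegral_ball_eq_circleMap (f : ℂ → ℝ≥0∞) (R : ℝ) :
    ∫⁻ z in ball 0 R, f z =
      ∫⁻ p in Ioo 0 R ×ˢ Ioo (-π) π, ENNReal.ofReal p.1 * f (circleMap 0 p.1 p.2) := by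
  have hpolar (p : ℝ × ℝ) : Complex.polarCoord.symm p = circleMap 0 p.1 p.2 := by
    simp [circleMap, Complex.exp_mul_I]
  have hball : Ioo 0 R ×ˢ Ioo (-π) π =
      {p | circleMap 0 p.1 p.2 ∈ ball 0 R} ∩ polarCoord.target := by
    ext p
    simp only [polarCoord_target, mem_prod, mem_Ioo, mem_inter_iff, mem_ofPred_eq, mem_Ioi,
      mem_ball_zero_iff, norm_circleMap_zero]
    grind
  have hmeas : MeasurableSet {p : ℝ × ℝ | circleMap 0 p.1 p.2 ∈ ball 0 R} := by
    simp only [mem_ball_zero_iff, norm_circleMap_zero]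
    exact measurableSet_lt (by fun_prop) measurable_const
  rw [← lintegral_indicator measurableSet_ball, ← Complex.lintegral_comp_polarCoord_symm, hball,
    ← Measure.restrict_restrict hmeas, ← lintegral_indicator hmeas]
  refine lintegral_congr fun p => ?_
  rw [hpolar, smul_eq_mul]
  by_cases hp : circleMap 0 p.1 p.2 ∈ ball 0 R
  · rw [indicator_of_mem hp, indicator_of_mem (s := {p : ℝ × ℝ | _ ∈ _}) hp]
  · rw [indicator_of_notMem hp, indicator_of_notMem (s := {p : ℝ × ℝ | _ ∈ _}) hp, mul_zero]

end ChangeOfVariables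

section SubMeanValue

variable {E : Type*} [NormedAddCommGroup E] [NormedSpace ℂ E] {H : ℂ → E}

lemma setIntegral_circleMap_eq_smul_center [CompleteSpace E] {c : ℂ} {r : ℝ}
    (hH : DiffContOnCl ℂ H (ball c |r|)) :
    ∫ θ in Ioo (-π) π, H (circleMap c r θ) = (2 * π) • H c := by
  have hperiodic : Function.Periodic (fun θ => H (circleMap c r θ)) (2 * π) :=
    (periodic_circleMap c r).comp H
  have hshift := hperiodic.intervalIntegral_add_eq 0 (-π)
  rw [zero_add, show -π + 2 * π = π by ring] at hshift
  rw [← integral_Ioc_eq_integral_Ioo, ← intervalIntegral.integral_of_le (by linarith [Real.pi_pos]),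
    ← hshift, ← hH.circleAverage, Real.circleAverage_def,
    smul_inv_smul₀ (by positivity)]

lemma two_pi_mul_enorm_le_lintegral_circleMap {c : ℂ} {r : ℝ}
    (hH : DiffContOnCl ℂ H (ball c |r|)) :
    ENNReal.ofReal (2 * π) * ‖H c‖ₑ ≤ ∫⁻ θ in Ioo (-π) π, ‖H (circleMap c r θ)‖ₑ := by
  let ι := UniformSpace.Completion.toComplL (𝕜 := ℂ) (E := E)
  have hι (x : E) : ‖ι x‖ₑ = ‖x‖ₑ :=
    enorm_eq_iff_norm_eq.2 (UniformSpace.Completion.norm_coe x)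
  have hmean := setIntegral_circleMap_eq_smul_center (ι.differentiable.comp_diffContOnCl hH)
  calc ENNReal.ofReal (2 * π) * ‖H c‖ₑ = ‖∫ θ in Ioo (-π) π, ι (H (circleMap c r θ))‖ₑ := by
        rw [← hι, ← Real.enorm_eq_ofReal (by positivity), ← enorm_smul]
        exact congrArg _ hmean.symm
    _ ≤ ∫⁻ θ in Ioo (-π) π, ‖H (circleMap c r θ)‖ₑ := by
        simpa only [hι] using enorm_integral_le_lintegral_enorm
          (μ := volume.restrict (Ioo (-π) π)) fun θ => ι (H (circleMap c r θ))

lemma lintegral_radial_mul_enorm_center_le {R : ℝ} (hH : DifferentiableOn ℂ H (ball 0 R))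
    {ω : ℝ → ℝ≥0∞} (hω : Measurable ω) :
    (∫⁻ r in Ioo 0 R, ENNReal.ofReal r * ω r) * (ENNReal.ofReal (2 * π) * ‖H 0‖ₑ) ≤
      ∫⁻ u in ball 0 R, ω ‖u‖ * ‖H u‖ₑ := by
  have hmem : ∀ p ∈ Ioo 0 R ×ˢ Ioo (-π) π, circleMap 0 p.1 p.2 ∈ ball 0 R := fun p hp => by
    rw [mem_ball_zero_iff, norm_circleMap_zero, abs_of_pos hp.1.1]
    exact hp.1.2
  have hpolar : ∫⁻ u in ball 0 R, ω ‖u‖ * ‖H u‖ₑ = ∫⁻ p in Ioo 0 R ×ˢ Ioo (-π) π,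
      ENNReal.ofReal p.1 * ω p.1 * ‖H (circleMap 0 p.1 p.2)‖ₑ := by
    rw [setLIntegral_ball_eq_circleMap]
    refine setLIntegral_congr_fun (measurableSet_Ioo.prod measurableSet_Ioo) fun p hp => ?_
    simp only [norm_circleMap_zero, abs_of_pos hp.1.1, mul_assoc]
  have hmeas : AEMeasurable
      (fun p : ℝ × ℝ => ENNReal.ofReal p.1 * ω p.1 * ‖H (circleMap 0 p.1 p.2)‖ₑ)
      ((volume.restrict (Ioo 0 R)).prod (volume.restrict (Ioo (-π) π))) := by
    have hcont : Continuous fun p : ℝ × ℝ => circleMap 0 p.1 p.2 := by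
      unfold circleMap
      fun_prop
    have hcomp : ContinuousOn (fun p : ℝ × ℝ => ‖H (circleMap 0 p.1 p.2)‖ₑ)
        (Ioo 0 R ×ˢ Ioo (-π) π) :=
      (hH.continuousOn.comp hcont.continuousOn hmem).enorm
    rw [Measure.prod_restrict]
    exact AEMeasurable.mul (Measurable.aemeasurable (by fun_prop))
      (hcomp.aemeasurable (measurableSet_Ioo.prod measurableSet_Ioo))
  rw [hpolar, Measure.volume_eq_prod, ← Measure.prod_restrict, lintegral_prod _ hmeas,
    ← lintegral_mul_const _ (by fun_prop)]
  refine setLIntegral_mono' measurableSet_Ioo fun r hr => ?_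
  have hHr : DiffContOnCl ℂ H (ball 0 |r|) := by
    rw [abs_of_pos hr.1]
    exact (hH.mono (closure_ball_subset_closedBall.trans
      (closedBall_subset_ball hr.2))).diffContOnCl
  calc ENNReal.ofReal r * ω r * (ENNReal.ofReal (2 * π) * ‖H 0‖ₑ)
      ≤ ENNReal.ofReal r * ω r * ∫⁻ θ in Ioo (-π) π, ‖H (circleMap 0 r θ)‖ₑ := by
        gcongr
        exact two_pi_mul_enorm_le_lintegral_circleMap hHr
    _ ≤ ∫⁻ θ in Ioo (-π) π, ENNReal.ofReal r * ω r * ‖H (circleMap 0 r θ)‖ₑ :=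
        lintegral_const_mul_le _ _

end SubMeanValue

section BergmanConst

/-- The constant `C^α(R) = (1 - (1 - R²)^{α-1}) / (α - 1)`, equal to the integral of
`2 r (1 - r²)^{α-2}` over `0 < r < R`. -/
noncomputable def bergmanConst (α R : ℝ) : ℝ :=
  (1 / (α - 1)) * (1 - (1 - R ^ 2) ^ (α - 1))

variable {α R : ℝ}

lemma one_sub_sq_pos {r : ℝ} (hr0 : 0 ≤ r) (hr1 : r < 1) : 0 < 1 - r ^ 2 :=
  sub_pos.2 (pow_lt_one₀ hr0 hr1 two_ne_zero)

lemma bergmanConst_pos (hα : α ≠ 1) (hR0 : 0 < R) (hR1 : R < 1) : 0 < bergmanConst α R := by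
  have hpos := one_sub_sq_pos hR0.le hR1
  have hlt : 1 - R ^ 2 < 1 := sub_lt_self 1 (by positivity)
  rw [bergmanConst]
  rcases hα.lt_or_gt with h | h
  · have hpow := Real.one_lt_rpow_of_pos_of_lt_one_of_neg hpos hlt (sub_neg.2 h)
    exact mul_pos_of_neg_of_neg (one_div_neg.2 (sub_neg.2 h)) (sub_neg.2 hpow)
  · have hpow := Real.rpow_lt_one hpos.le hlt (sub_pos.2 h)
    exact mul_pos (one_div_pos.2 (sub_pos.2 h)) (sub_pos.2 hpow)

lemma hasDerivAt_bergmanConst_div_two (hα : α ≠ 1) {r : ℝ} (hr : 0 < 1 - r ^ 2) :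
    HasDerivAt (fun r => bergmanConst α r / 2) (r * (1 - r ^ 2) ^ (α - 2)) r := by
  have hbase : HasDerivAt (fun r : ℝ => 1 - r ^ 2) (-(2 * r)) r := by
    simpa using (hasDerivAt_pow 2 r).const_sub 1
  have hpow := hbase.rpow_const (p := α - 1) (Or.inl hr.ne')
  refine (((hpow.const_sub 1).const_mul (1 / (α - 1))).div_const 2).congr_deriv ?_
  have : α - 1 ≠ 0 := sub_ne_zero.2 hα
  rw [show α - 1 - 1 = α - 2 by ring]
  field_simp

lemma lintegral_mul_one_sub_sq_rpow (hα : α ≠ 1) (hR0 : 0 ≤ R) (hR1 : R < 1) :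
    ∫⁻ r in Ioo 0 R, ENNReal.ofReal r * ENNReal.ofReal ((1 - r ^ 2) ^ (α - 2)) =
      ENNReal.ofReal (bergmanConst α R / 2) := by
  have hpos : ∀ r ∈ Icc 0 R, 0 < 1 - r ^ 2 := fun r hr =>
    one_sub_sq_pos hr.1 (hr.2.trans_lt hR1)
  have hcont : ContinuousOn (fun r : ℝ => r * (1 - r ^ 2) ^ (α - 2)) (Icc 0 R) :=
    continuousOn_id.mul (ContinuousOn.rpow_const (by fun_prop) fun r hr => Or.inl (hpos r hr).ne')
  have hintegral : ∫ r in Ioo 0 R, r * (1 - r ^ 2) ^ (α - 2) = bergmanConst α R / 2 := by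
    rw [← integral_Ioc_eq_integral_Ioo, ← intervalIntegral.integral_of_le hR0,
      intervalIntegral.integral_eq_sub_of_hasDerivAt
        (f := fun r => bergmanConst α r / 2)]
    · simp [bergmanConst]
    · rw [uIcc_of_le hR0]
      exact fun r hr => hasDerivAt_bergmanConst_div_two hα (hpos r hr)
    · exact (hcont.mono (uIcc_of_le hR0).subset).intervalIntegrable
  rw [← hintegral, ofReal_integral_eq_lintegral_ofReal]
  · exact setLIntegral_congr_fun measurableSet_Ioo fun r hr => (ENNReal.ofReal_mul hr.1.le).symm
  · exact (hcont.integrableOn_compact isCompact_Icc).mono_set Ioo_subset_Icc_self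
  · refine ae_restrict_of_forall_mem measurableSet_Ioo fun r hr => ?_
    exact mul_nonneg hr.1.le (Real.rpow_nonneg (hpos r (Ioo_subset_Icc_self hr)).le _)

end BergmanConst

section DiskInvolution

/-- The automorphism `φ_w(u) = (w - u) / (1 - w̄ u)` of the unit disc, which is its own inverse and
exchanges `0` and `w`; `‖φ_w(u)‖` is the pseudohyperbolic distance of `w` and `u`. -/
noncomputable def diskInvolution (w u : ℂ) : ℂ := (w - u) / (1 - conj w * u)

variable {w u z : ℂ} {R : ℝ}

lemma one_sub_conj_mul_mem_slitPlane (hw : ‖w‖ < 1) (hu : ‖u‖ < 1) :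
    1 - conj w * u ∈ Complex.slitPlane := by
  rw [sub_eq_add_neg]
  apply Complex.mem_slitPlane_of_norm_lt_one
  rw [norm_neg, norm_mul, RCLike.norm_conj]
  exact mul_lt_one_of_nonneg_of_lt_one_left (norm_nonneg w) hw hu.le

lemma one_sub_conj_mul_ne_zero (hw : ‖w‖ < 1) (hu : ‖u‖ < 1) : 1 - conj w * u ≠ 0 :=
  Complex.slitPlane_ne_zero (one_sub_conj_mul_mem_slitPlane hw hu)

lemma diskInvolution_zero_right (w : ℂ) : diskInvolution w 0 = w := by
  simp [diskInvolution]

lemma one_sub_norm_diskInvolution_sq (hw : ‖w‖ < 1) (hu : ‖u‖ < 1) :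
    1 - ‖diskInvolution w u‖ ^ 2 =
      (1 - ‖w‖ ^ 2) * (1 - ‖u‖ ^ 2) / ‖1 - conj w * u‖ ^ 2 := by
  have hden : ‖1 - conj w * u‖ ^ 2 ≠ 0 :=
    pow_ne_zero 2 (norm_ne_zero_iff.2 (one_sub_conj_mul_ne_zero hw hu))
  rw [diskInvolution, norm_div, div_pow, eq_div_iff hden, sub_mul, div_mul_cancel₀ _ hden]
  simp only [← Complex.normSq_eq_norm_sq, Complex.normSq_apply, Complex.sub_re, Complex.sub_im,
    Complex.mul_re, Complex.mul_im, Complex.conj_re, Complex.conj_im, Complex.one_re,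
    Complex.one_im]
  ring

lemma norm_diskInvolution_lt_one (hw : ‖w‖ < 1) (hu : ‖u‖ < 1) : ‖diskInvolution w u‖ < 1 := by
  have hden := norm_pos_iff.2 (one_sub_conj_mul_ne_zero hw hu)
  have hpos : 0 < 1 - ‖diskInvolution w u‖ ^ 2 := by
    rw [one_sub_norm_diskInvolution_sq hw hu]
    have := one_sub_sq_pos (norm_nonneg w) hw
    have := one_sub_sq_pos (norm_nonneg u) hu
    positivity
  exact (sq_lt_one_iff₀ (norm_nonneg _)).1 (sub_pos.1 hpos)

lemma diskInvolution_diskInvolution (hw : ‖w‖ < 1) (hu : ‖u‖ < 1) :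
    diskInvolution w (diskInvolution w u) = u := by
  have hmul : diskInvolution w u * (1 - conj w * u) = w - u :=
    div_mul_cancel₀ _ (one_sub_conj_mul_ne_zero hw hu)
  rw [diskInvolution,
    div_eq_iff (one_sub_conj_mul_ne_zero hw (norm_diskInvolution_lt_one hw hu))]
  linear_combination -hmul

lemma injOn_diskInvolution (hw : ‖w‖ < 1) : InjOn (diskInvolution w) (ball 0 1) :=
  LeftInvOn.injOn fun _ hu => diskInvolution_diskInvolution hw (mem_ball_zero_iff.1 hu)

lemma hasDerivAt_diskInvolution (hw : ‖w‖ < 1) (hu : ‖u‖ < 1) :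
    HasDerivAt (diskInvolution w) ((conj w * w - 1) / (1 - conj w * u) ^ 2) u := by
  have hnum : HasDerivAt (fun u : ℂ => w - u) (-1) u := (hasDerivAt_id u).const_sub w
  have hden : HasDerivAt (fun u : ℂ => 1 - conj w * u) (-conj w) u := by
    simpa using ((hasDerivAt_id u).const_mul (conj w)).const_sub 1
  refine (hnum.div hden (one_sub_conj_mul_ne_zero hw hu)).congr_deriv ?_
  congr 1
  ring

lemma norm_conj_mul_self_sub_one (hw : ‖w‖ < 1) : ‖conj w * w - 1‖ = 1 - ‖w‖ ^ 2 := by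
  rw [norm_sub_rev, Complex.conj_mul', ← Complex.ofReal_pow, ← Complex.ofReal_one,
    ← Complex.ofReal_sub, Complex.norm_of_nonneg (one_sub_sq_pos (norm_nonneg w) hw).le]

lemma image_diskInvolution_ball (hw : ‖w‖ < 1) (hR : R ≤ 1) :
    diskInvolution w '' ball 0 R = pseudohyperbolicBall w R := by
  ext z
  constructor
  · rintro ⟨u, hu, rfl⟩
    rw [mem_ball_zero_iff] at hu
    have hu1 := hu.trans_le hR
    refine ⟨norm_diskInvolution_lt_one hw hu1, ?_⟩
    rwa [← diskInvolution_diskInvolution hw hu1] at hu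
  · rintro ⟨hz, hzR⟩
    exact ⟨diskInvolution w z, mem_ball_zero_iff.2 hzR, diskInvolution_diskInvolution hw hz⟩

lemma norm_diskInvolution_comm (w z : ℂ) : ‖diskInvolution w z‖ = ‖diskInvolution z w‖ := by
  have hden : conj (1 - conj w * z) = 1 - conj z * w := by simp [mul_comm]
  rw [diskInvolution, diskInvolution, norm_div, norm_div, norm_sub_rev, ← hden, RCLike.norm_conj]

lemma mem_pseudohyperbolicBall_symm (hw : ‖w‖ < 1) (hz : z ∈ pseudohyperbolicBall w R) :
    w ∈ pseudohyperbolicBall z R :=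
  ⟨hw, (norm_diskInvolution_comm z w).trans_lt hz.2⟩

lemma pseudohyperbolicBall_subset_ball (w : ℂ) (R : ℝ) : pseudohyperbolicBall w R ⊆ ball 0 1 :=
  fun _ hz => mem_ball_zero_iff.2 hz.1

lemma measurableSet_mem_pseudohyperbolicBall (R : ℝ) :
    MeasurableSet {p : ℂ × ℂ | p.2 ∈ pseudohyperbolicBall p.1 R} := by
  have hdist : Measurable fun p : ℂ × ℂ => ‖(p.1 - p.2) / (1 - conj p.1 * p.2)‖ := by
    fun_prop
  exact (measurableSet_lt measurable_snd.norm measurable_const).inter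
    (measurableSet_lt hdist measurable_const)

end DiskInvolution

section HyperbolicMeasure

variable {w z : ℂ} {R : ℝ} {s : Set ℂ}

instance : SFinite hyperbolicMeasure := by
  unfold hyperbolicMeasure
  infer_instance

lemma setLIntegral_hyperbolicMeasure (hs : MeasurableSet s) (f : ℂ → ℝ≥0∞) :
    ∫⁻ z in s, f z ∂hyperbolicMeasure =
      ∫⁻ z in s, ENNReal.ofReal (((1 - ‖z‖ ^ 2) ^ 2)⁻¹) * f z :=
  setLIntegral_withDensity_eq_setLIntegral_mul_non_measurable _ (by fun_prop) f hs
    (.of_forall fun _ => ENNReal.ofReal_lt_top)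

lemma setLIntegral_image_diskInvolution (hw : ‖w‖ < 1) (hs : MeasurableSet s)
    (hs1 : s ⊆ ball 0 1) (f : ℂ → ℝ≥0∞) :
    ∫⁻ z in diskInvolution w '' s, f z ∂hyperbolicMeasure =
      ∫⁻ u in s, f (diskInvolution w u) ∂hyperbolicMeasure := by
  have hnorm : ∀ u ∈ s, ‖u‖ < 1 := fun u hu => mem_ball_zero_iff.1 (hs1 hu)
  have hderiv : ∀ u ∈ s, HasDerivWithinAt (diskInvolution w)
      ((conj w * w - 1) / (1 - conj w * u) ^ 2) s u := fun u hu =>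
    (hasDerivAt_diskInvolution hw (hnorm u hu)).hasDerivWithinAt
  have hinj := (injOn_diskInvolution hw).mono hs1
  have himage : MeasurableSet (diskInvolution w '' s) :=
    hs.image_of_continuousOn_injOn (fun u hu => (hderiv u hu).continuousWithinAt) hinj
  rw [setLIntegral_hyperbolicMeasure himage, setLIntegral_hyperbolicMeasure hs,
    lintegral_image_eq_lintegral_norm_deriv_sq_mul hs hderiv hinj]
  refine setLIntegral_congr_fun hs fun u hu => ?_
  rw [← mul_assoc, ← ENNReal.ofReal_mul (by positivity)]
  congr 2
  rw [one_sub_norm_diskInvolution_sq hw (hnorm u hu), norm_div, norm_pow,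
    norm_conj_mul_self_sub_one hw]
  have := (one_sub_sq_pos (norm_nonneg w) hw).ne'
  have := (one_sub_sq_pos (norm_nonneg u) (hnorm u hu)).ne'
  have := norm_ne_zero_iff.2 (one_sub_conj_mul_ne_zero hw (hnorm u hu))
  field_simp

lemma setLIntegral_pseudohyperbolicBall (hw : ‖w‖ < 1) (hR : R ≤ 1) (f : ℂ → ℝ≥0∞) :
    ∫⁻ z in pseudohyperbolicBall w R, f z ∂hyperbolicMeasure =
      ∫⁻ u in ball 0 R, f (diskInvolution w u) ∂hyperbolicMeasure := by
  rw [← image_diskInvolution_ball hw hR,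
    setLIntegral_image_diskInvolution hw measurableSet_ball (ball_subset_ball hR)]

lemma hyperbolicMeasure_pseudohyperbolicBall (hw : ‖w‖ < 1) (hR : R ≤ 1) :
    hyperbolicMeasure (pseudohyperbolicBall w R) = hyperbolicMeasure (ball 0 R) := by
  simpa only [setLIntegral_one] using setLIntegral_pseudohyperbolicBall hw hR fun _ => 1

lemma hyperbolicMeasure_ball_lt_top (hR0 : 0 ≤ R) (hR1 : R < 1) :
    hyperbolicMeasure (ball 0 R) < ∞ := by
  have hpos := one_sub_sq_pos hR0 hR1
  calc hyperbolicMeasure (ball 0 R)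
      = ∫⁻ u in ball (0 : ℂ) R, ENNReal.ofReal (((1 - ‖u‖ ^ 2) ^ 2)⁻¹) :=
        withDensity_apply _ measurableSet_ball
    _ ≤ ∫⁻ _ in ball (0 : ℂ) R, ENNReal.ofReal (((1 - R ^ 2) ^ 2)⁻¹) := by
        refine setLIntegral_mono' measurableSet_ball fun u hu => ?_
        have := (mem_ball_zero_iff.1 hu).le
        gcongr
    _ < ∞ := by
        rw [setLIntegral_const]
        exact ENNReal.mul_lt_top ENNReal.ofReal_lt_top measure_ball_lt_top

lemma hypMaxNyquistDensity_nonneg (Ω : Set ℂ) (R : ℝ) : 0 ≤ hypMaxNyquistDensity Ω R :=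
  Real.iSup_nonneg fun _ => ENNReal.toReal_nonneg

lemma hyperbolicMeasure_inter_le_hypMaxNyquistDensity (Ω : Set ℂ) (hR0 : 0 ≤ R) (hR1 : R < 1)
    (hz : ‖z‖ < 1) :
    hyperbolicMeasure (Ω ∩ pseudohyperbolicBall z R) ≤
      ENNReal.ofReal (hypMaxNyquistDensity Ω R) := by
  have htop := hyperbolicMeasure_ball_lt_top hR0 hR1
  have hle {y : ℂ} (hy : ‖y‖ < 1) :
      hyperbolicMeasure (Ω ∩ pseudohyperbolicBall y R) ≤ hyperbolicMeasure (ball 0 R) :=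
    (measure_mono inter_subset_right).trans_eq (hyperbolicMeasure_pseudohyperbolicBall hy hR1.le)
  have hbdd : BddAbove (range fun y : ball (0 : ℂ) 1 =>
      (hyperbolicMeasure (Ω ∩ pseudohyperbolicBall y R)).toReal) := by
    refine ⟨(hyperbolicMeasure (ball 0 R)).toReal, ?_⟩
    rintro _ ⟨y, rfl⟩
    exact ENNReal.toReal_mono htop.ne (hle (mem_ball_zero_iff.1 y.2))
  rw [ENNReal.le_ofReal_iff_toReal_le ((hle hz).trans_lt htop).ne
    (hypMaxNyquistDensity_nonneg Ω R)]
  exact le_ciSup hbdd ⟨z, mem_ball_zero_iff.2 hz⟩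

end HyperbolicMeasure

section BergmanDensity

variable {E : Type*} [NormedAddCommGroup E]

/-- The density `(1 - |z|²)^α ‖F z‖` with respect to the hyperbolic measure of the measure
`‖F z‖ (1 - |z|²)^{α-2} dz` whose total mass on the disc is `π` times the `A¹_α` norm of `F`. -/
noncomputable def bergmanDensity (α : ℝ) (F : ℂ → E) (z : ℂ) : ℝ≥0∞ :=
  ENNReal.ofReal ((1 - ‖z‖ ^ 2) ^ α) * ‖F z‖ₑ

variable {α R : ℝ} {F : ℂ → E} {s : Set ℂ}

lemma setLIntegral_bergmanDensity (hs : MeasurableSet s) (hs1 : s ⊆ ball 0 1) :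
    ∫⁻ z in s, bergmanDensity α F z ∂hyperbolicMeasure =
      ∫⁻ z in s, ENNReal.ofReal ((1 - ‖z‖ ^ 2) ^ (α - 2)) * ‖F z‖ₑ := by
  rw [setLIntegral_hyperbolicMeasure hs]
  refine setLIntegral_congr_fun hs fun z hz => ?_
  have hpos := one_sub_sq_pos (norm_nonneg z) (mem_ball_zero_iff.1 (hs1 hz))
  rw [bergmanDensity, ← mul_assoc, ← ENNReal.ofReal_mul (by positivity), Real.rpow_sub hpos,
    Real.rpow_two, div_eq_inv_mul]

lemma setLIntegral_bergmanDensity_eq_ofReal_integral (hs : MeasurableSet s) (hs1 : s ⊆ ball 0 1)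
    (hF : IntegrableOn (fun z => ‖F z‖ * (1 - ‖z‖ ^ 2) ^ (α - 2)) s) :
    ∫⁻ z in s, bergmanDensity α F z ∂hyperbolicMeasure =
      ENNReal.ofReal (∫ z in s, ‖F z‖ * (1 - ‖z‖ ^ 2) ^ (α - 2)) := by
  have hweight : ∀ z ∈ s, 0 ≤ (1 - ‖z‖ ^ 2) ^ (α - 2) := fun z hz =>
    Real.rpow_nonneg (one_sub_sq_pos (norm_nonneg z) (mem_ball_zero_iff.1 (hs1 hz))).le _
  rw [setLIntegral_bergmanDensity hs hs1, ofReal_integral_eq_lintegral_ofReal hF]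
  · refine setLIntegral_congr_fun hs fun z _ => ?_
    rw [ENNReal.ofReal_mul (norm_nonneg _), ofReal_norm, mul_comm]
  · exact ae_restrict_of_forall_mem hs fun z hz => mul_nonneg (norm_nonneg _) (hweight z hz)

lemma aemeasurable_bergmanDensity {μ : Measure ℂ} (hs : MeasurableSet s) (hF : ContinuousOn F s) :
    AEMeasurable (bergmanDensity α F) (μ.restrict s) :=
  AEMeasurable.mul (Measurable.aemeasurable (by fun_prop)) (hF.enorm.aemeasurable hs)

lemma setIntegral_norm_mul_nonneg (α : ℝ) (F : ℂ → E) :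
    0 ≤ ∫ z in ball (0 : ℂ) 1, ‖F z‖ * (1 - ‖z‖ ^ 2) ^ (α - 2) :=
  setIntegral_nonneg measurableSet_ball fun z hz => mul_nonneg (norm_nonneg _)
    (Real.rpow_nonneg (one_sub_sq_pos (norm_nonneg z) (mem_ball_zero_iff.1 hz)).le _)

variable [NormedSpace ℂ E]

lemma ofReal_mul_bergmanDensity_zero_le (hα : α ≠ 1) (hR0 : 0 ≤ R) (hR1 : R < 1)
    (hF : DifferentiableOn ℂ F (ball 0 R)) :
    ENNReal.ofReal (π * bergmanConst α R) * ‖F 0‖ₑ ≤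
      ∫⁻ u in ball 0 R, bergmanDensity α F u ∂hyperbolicMeasure := by
  rw [setLIntegral_bergmanDensity measurableSet_ball (ball_subset_ball hR1.le)]
  refine le_of_eq_of_le ?_ (lintegral_radial_mul_enorm_center_le hF
    (ω := fun r => ENNReal.ofReal ((1 - r ^ 2) ^ (α - 2))) (by fun_prop))
  rw [lintegral_mul_one_sub_sq_rpow hα hR0 hR1, ← mul_assoc,
    ← ENNReal.ofReal_mul' (by positivity)]
  congr 2
  ring

/-- The weighted composition `u ↦ (1 - w̄ u)^{-2α} F(φ_w u)`, which up to the constant factor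
`(1 - |w|²)^α` is the isometry of `A¹_α` induced by the automorphism `φ_w`. -/
noncomputable def weightedComposition (α : ℝ) (w : ℂ) (F : ℂ → E) (u : ℂ) : E :=
  (1 - conj w * u) ^ ((-(2 * α) : ℝ) : ℂ) • F (diskInvolution w u)

variable {w u : ℂ}

lemma weightedComposition_zero (α : ℝ) (w : ℂ) (F : ℂ → E) :
    weightedComposition α w F 0 = F w := by
  simp [weightedComposition, diskInvolution_zero_right]

lemma differentiableOn_weightedComposition (α : ℝ) (hw : ‖w‖ < 1)
    (hF : DifferentiableOn ℂ F (ball 0 1)) :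
    DifferentiableOn ℂ (weightedComposition α w F) (ball 0 1) := by
  intro u hu
  rw [mem_ball_zero_iff] at hu
  have hφu := isOpen_ball.mem_nhds (mem_ball_zero_iff.2 (norm_diskInvolution_lt_one hw hu))
  have hcomp : DifferentiableAt ℂ (fun u => F (diskInvolution w u)) u :=
    (hF.differentiableAt hφu).comp u (hasDerivAt_diskInvolution hw hu).differentiableAt
  have hfactor : DifferentiableAt ℂ
      (fun u => (1 - conj w * u) ^ ((-(2 * α) : ℝ) : ℂ)) u :=
    DifferentiableAt.cpow_const (by fun_prop) (one_sub_conj_mul_mem_slitPlane hw hu)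
  exact (hfactor.smul hcomp).differentiableWithinAt

lemma bergmanDensity_diskInvolution (α : ℝ) (F : ℂ → E) (hw : ‖w‖ < 1) (hu : ‖u‖ < 1) :
    bergmanDensity α F (diskInvolution w u) =
      ENNReal.ofReal ((1 - ‖w‖ ^ 2) ^ α) * bergmanDensity α (weightedComposition α w F) u := by
  have hwpos := one_sub_sq_pos (norm_nonneg w) hw
  have hupos := one_sub_sq_pos (norm_nonneg u) hu
  have hden := norm_pos_iff.2 (one_sub_conj_mul_ne_zero hw hu)
  have hweight : (1 - ‖diskInvolution w u‖ ^ 2) ^ α =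
      (1 - ‖w‖ ^ 2) ^ α * ((1 - ‖u‖ ^ 2) ^ α * ‖1 - conj w * u‖ ^ (-(2 * α))) := by
    rw [one_sub_norm_diskInvolution_sq hw hu, Real.div_rpow (by positivity) (by positivity),
      Real.mul_rpow hwpos.le hupos.le, Real.rpow_neg hden.le, Real.rpow_mul hden.le,
      Real.rpow_two, div_eq_mul_inv, mul_assoc]
  rw [bergmanDensity, bergmanDensity, weightedComposition, enorm_smul, ← ofReal_norm (_ ^ _),
    Complex.norm_cpow_real, hweight, ENNReal.ofReal_mul (by positivity),
    ENNReal.ofReal_mul (by positivity)]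
  ring

lemma ofReal_mul_bergmanDensity_le (hα : α ≠ 1) (hR0 : 0 ≤ R) (hR1 : R < 1)
    (hF : DifferentiableOn ℂ F (ball 0 1)) (hw : ‖w‖ < 1) :
    ENNReal.ofReal (π * bergmanConst α R) * bergmanDensity α F w ≤
      ∫⁻ z in pseudohyperbolicBall w R, bergmanDensity α F z ∂hyperbolicMeasure := by
  set H := weightedComposition α w F
  have hH0 : H 0 = F w := weightedComposition_zero α w F
  have hH : DifferentiableOn ℂ H (ball 0 R) :=
    (differentiableOn_weightedComposition α hw hF).mono (ball_subset_ball hR1.le)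
  calc ENNReal.ofReal (π * bergmanConst α R) * bergmanDensity α F w
      = ENNReal.ofReal ((1 - ‖w‖ ^ 2) ^ α) *
          (ENNReal.ofReal (π * bergmanConst α R) * ‖H 0‖ₑ) := by
        rw [hH0, bergmanDensity, mul_left_comm]
    _ ≤ ENNReal.ofReal ((1 - ‖w‖ ^ 2) ^ α) *
          ∫⁻ u in ball 0 R, bergmanDensity α H u ∂hyperbolicMeasure := by
        gcongr
        exact ofReal_mul_bergmanDensity_zero_le hα hR0 hR1 hH
    _ = ∫⁻ u in ball 0 R, bergmanDensity α F (diskInvolution w u) ∂hyperbolicMeasure := by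
        rw [← lintegral_const_mul' _ _ ENNReal.ofReal_ne_top]
        refine setLIntegral_congr_fun measurableSet_ball fun u hu => ?_
        exact (bergmanDensity_diskInvolution α F hw
          ((mem_ball_zero_iff.1 hu).trans hR1)).symm
    _ = ∫⁻ z in pseudohyperbolicBall w R, bergmanDensity α F z ∂hyperbolicMeasure :=
        (setLIntegral_pseudohyperbolicBall hw hR1.le _).symm

lemma ofReal_mul_setLIntegral_bergmanDensity_le (hα : α ≠ 1) (hR0 : 0 ≤ R) (hR1 : R < 1)
    (hF : DifferentiableOn ℂ F (ball 0 1)) {Ω : Set ℂ} (hΩ : MeasurableSet Ω)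
    (hΩ1 : Ω ⊆ ball 0 1) :
    ENNReal.ofReal (π * bergmanConst α R) *
        ∫⁻ w in Ω, bergmanDensity α F w ∂hyperbolicMeasure ≤
      ENNReal.ofReal (hypMaxNyquistDensity Ω R) *
        ∫⁻ z in ball 0 1, bergmanDensity α F z ∂hyperbolicMeasure := by
  have hS := measurableSet_mem_pseudohyperbolicBall R
  have hnorm : ∀ w ∈ Ω, ‖w‖ < 1 := fun w hw => mem_ball_zero_iff.1 (hΩ1 hw)
  have hrestrict : hyperbolicMeasure.restrict Ω =
      (hyperbolicMeasure.restrict (ball 0 1)).restrict Ω := by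
    rw [Measure.restrict_restrict hΩ, inter_eq_left.2 hΩ1]
  rw [hrestrict]
  refine mul_setLIntegral_le_of_le_setLIntegral hS hΩ
    (aemeasurable_bergmanDensity measurableSet_ball hF.continuousOn) (fun w hw => ?_)
    (ae_restrict_of_forall_mem measurableSet_ball fun z hz => ?_)
  · have hB : MeasurableSet (pseudohyperbolicBall w R) := measurable_prodMk_left hS
    change _ ≤ ∫⁻ z in pseudohyperbolicBall w R, _ ∂_
    rw [Measure.restrict_restrict hB, inter_eq_left.2 (pseudohyperbolicBall_subset_ball w R)]
    exact ofReal_mul_bergmanDensity_le hα hR0 hR1 hF (hnorm w hw)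
  · have hsub : Ω ∩ {w | z ∈ pseudohyperbolicBall w R} ⊆ Ω ∩ pseudohyperbolicBall z R :=
      fun w hw => ⟨hw.1, mem_pseudohyperbolicBall_symm (hnorm w hw.1) hw.2⟩
    calc hyperbolicMeasure.restrict (ball 0 1) (Ω ∩ {w | z ∈ pseudohyperbolicBall w R})
        ≤ hyperbolicMeasure (Ω ∩ {w | z ∈ pseudohyperbolicBall w R}) :=
          Measure.restrict_apply_le _ _
      _ ≤ hyperbolicMeasure (Ω ∩ pseudohyperbolicBall z R) := measure_mono hsub
      _ ≤ ENNReal.ofReal (hypMaxNyquistDensity Ω R) :=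
          hyperbolicMeasure_inter_le_hypMaxNyquistDensity Ω hR0 hR1 (mem_ball_zero_iff.1 hz)

end BergmanDensity

end LargeSieve

open LargeSieve in
theorem large_sieve_bergman_general {E : Type*} [NormedAddCommGroup E] [NormedSpace ℂ E]
    {α : ℝ} (hα : α ≠ 1) {F : ℂ → E} (hF : DifferentiableOn ℂ F (Metric.ball (0 : ℂ) 1))
    (hFint : IntegrableOn (fun z => ‖F z‖ * (1 - ‖z‖ ^ 2) ^ (α - 2)) (Metric.ball (0 : ℂ) 1))
    {R : ℝ} (hR0 : 0 < R) (hR1 : R < 1) {Ω : Set ℂ} (hΩmeas : MeasurableSet Ω)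
    (hΩsub : Ω ⊆ Metric.ball (0 : ℂ) 1) :
    (1 / Real.pi) * (∫ z in Ω, ‖F z‖ * (1 - ‖z‖ ^ 2) ^ (α - 2)) ≤
      hypMaxNyquistDensity Ω R / (Real.pi * bergmanConst α R) *
        ((1 / Real.pi) * ∫ z in Metric.ball (0 : ℂ) 1, ‖F z‖ * (1 - ‖z‖ ^ 2) ^ (α - 2)) := by
  have hC := bergmanConst_pos hα hR0 hR1
  have hρ := hypMaxNyquistDensity_nonneg Ω R
  have hnorm := setIntegral_norm_mul_nonneg α F
  have hsieve := ofReal_mul_setLIntegral_bergmanDensity_le hα hR0.le hR1 hF hΩmeas hΩsub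
  rw [setLIntegral_bergmanDensity_eq_ofReal_integral hΩmeas hΩsub (hFint.mono_set hΩsub),
    setLIntegral_bergmanDensity_eq_ofReal_integral measurableSet_ball subset_rfl hFint,
    ← ENNReal.ofReal_mul (by positivity), ← ENNReal.ofReal_mul hρ,
    ENNReal.ofReal_le_ofReal_iff (by positivity)] at hsieve
  rw [mul_left_comm]
  gcongr
  rwa [div_mul_eq_mul_div, le_div_iff₀' (by positivity)]

/-- **hyperbolic large sieve for the Bergman space `A¹_α(𝔻)`.**
Let `α > 1` and let `F ∈ A¹_α(𝔻)`, i.e. `F` analytic on `𝔻` with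
`‖F‖ = (1/π) ∫_𝔻 |F(z)| (1 - |z|²)^{α-2} dz < ∞`.  Then for every `0 < R < 1` and
every measurable `Ω ⊆ 𝔻`, with `C^α(R) = (1/(α-1))(1 - (1 - R²)^{α-1})`:
`(1/π) ∫_Ω |F(z)| (1 - |z|²)^{α-2} dz ≤ 2 ρ_𝔻(Ω, R) C^α(R)⁻¹ ‖F‖`. -/
theorem large_sieve_bergman
    (α : ℝ) (hα : 1 < α)
    (F : ℂ → ℂ) (hF : DifferentiableOn ℂ F (Metric.ball (0 : ℂ) 1))
    (hFint : IntegrableOn (fun z => ‖F z‖ * (1 - ‖z‖ ^ 2) ^ (α - 2))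
      (Metric.ball (0 : ℂ) 1) volume)
    (R : ℝ) (hR0 : 0 < R) (hR1 : R < 1)
    (Ω : Set ℂ) (hΩmeas : MeasurableSet Ω) (hΩsub : Ω ⊆ Metric.ball (0 : ℂ) 1) :
    (1 / Real.pi) * (∫ z in Ω, ‖F z‖ * (1 - ‖z‖ ^ 2) ^ (α - 2)) ≤
      2 * hypMaxNyquistDensity Ω R / ((1 / (α - 1)) * (1 - (1 - R ^ 2) ^ (α - 1))) *
        ((1 / Real.pi) * ∫ z in Metric.ball (0 : ℂ) 1, ‖F z‖ * (1 - ‖z‖ ^ 2) ^ (α - 2)) := by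
  refine (large_sieve_bergman_general hα.ne' hF hFint hR0 hR1 hΩmeas hΩsub).trans ?_
  have hC := LargeSieve.bergmanConst_pos hα.ne' hR0 hR1
  have hρ := LargeSieve.hypMaxNyquistDensity_nonneg Ω R
  have hnorm := LargeSieve.setIntegral_norm_mul_nonneg α F
  have hπC := le_mul_of_one_le_left hC.le
    (Real.one_le_pi_div_two.trans (half_le_self Real.pi_nonneg))
  change _ ≤ 2 * hypMaxNyquistDensity Ω R / LargeSieve.bergmanConst α R * _
  gcongr
  exact le_mul_of_one_le_left hρ one_le_two
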